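/- Let d ≥ 3 and let Θ°_d = {(a,b,c) ∈ ℤ³ : a,b,c ≥ 1, a+b+c = d}. The assignment of triple ratios induces a bijection between configurations of three maximum-span flags and (ℝ∖{0})^{Θ°_d}; that is: (i) if (E,F,G) and (E',F',G') are triples of flags in ℝ^d with the maximum span property such that X_{a,b,c}(E,F,G) = X_{a,b,c}(E',F',G') for all (a,b,c) ∈ Θ°_d, then there exists g ∈ GL(d,ℝ) with g·E^(i) = E'^(i), g·F^(i) = F'^(i), g·G^(i) = G'^(i) for all i; and (ii) for every function x : Θ°_d → ℝ∖{0} there exists a triple of flags (E,F,G) in ℝ^d with the maximum span property such that X_{a,b,c}(E,F,G) = x(a,b,c) for all (a,b,c) ∈ Θ°_d. -/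

import Mathlib

noncomputable section

abbrev Vec (d : ℕ) : Type := Fin d → ℝ

/-- A complete flag in `ℝ^d`. -/
def IsFlag {d : ℕ} (F : ℕ → Submodule ℝ (Vec d)) : Prop :=
  Monotone F ∧ ∀ i, i ≤ d → Module.finrank ℝ (F i) = i

/-- The maximum span property for a tuple of flags. -/
def MaxSpan {d t : ℕ} (F : Fin t → ℕ → Submodule ℝ (Vec d)) : Prop :=
  ∀ a : Fin t → ℕ, (∀ j, a j ≤ d) →
    Module.finrank ℝ ↥(⨆ j, F j (a j)) = min (∑ j, a j) d

/-- The wedge product of the concatenated vectors, viewed as a real number via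
`⋀^d ℝ^d ≅ ℝ` (determinant in the standard basis); junk value `0` if the total
number of vectors is not `d`. -/
def wedgeDet {d n1 n2 n3 : ℕ} (u : Fin n1 → Vec d) (v : Fin n2 → Vec d)
    (w : Fin n3 → Vec d) : ℝ :=
  if h : n1 + n2 + n3 = d then
    (Matrix.of fun i j => (Fin.append (Fin.append u v) w) (Fin.cast h.symm j) i).det
  else 0

/-- A choice, for each `k ≤ d`, of a spanning `k`-tuple of vectors of the member
`F k` of a flag; equivalently a choice of a nonzero element of `⋀^k F^(k)`. -/
def ChoiceFor {d : ℕ} (F : ℕ → Submodule ℝ (Vec d)) (e : (k : ℕ) → Fin k → Vec d) : Prop :=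
  ∀ k, k ≤ d → Submodule.span ℝ (Set.range (e k)) = F k

/-- The `(a,b,c)`-triple ratio `X_{a,b,c}(E,F,G)` computed from choices. -/
def tripleRatio {d : ℕ} (a b c : ℕ) (e f g : (k : ℕ) → Fin k → Vec d) : ℝ :=
  (wedgeDet (e (a-1)) (f b) (g (c+1)) * wedgeDet (e a) (f (b+1)) (g (c-1)) *
   wedgeDet (e (a+1)) (f (b-1)) (g c)) /
  (wedgeDet (e (a+1)) (f b) (g (c-1)) * wedgeDet (e a) (f (b-1)) (g (c+1)) *
   wedgeDet (e (a-1)) (f (b+1)) (g c))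

/-!
Acting by `GL(d, ℝ)` and rescaling, one brings a triple `(E, F, G)` to a normal form: `E` and `G`
are the two opposite flags of the standard basis, and `F` is spanned successively by the columns of
a lower unitriangular matrix `M` whose first column consists of ones. Then `e^(a) ∧ f^(b) ∧ g^(c)`
is the minor of `M` on the rows `a, …, a + b - 1` and the first `b` columns, and the triple has the
maximum span property if and only if all these minors are nonzero.

In the equation prescribing the triple ratio at `(a, b, c)`, the minor with index `(a, b + 1)` is
determined by minors with smaller `b`, or with the same `b` and smaller `a`. Since the minors with
`a = 0` or `b ≤ 1` equal `1`, the triple ratios determine all minors, and for given nonzero ratios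
the recursion is solved by an explicit nonvanishing product. The minors in turn determine the
entries of `M`, because the minor with a given bottom right entry is affine in that entry, with
slope a smaller, nonzero minor.
-/

section HexRatio

variable {K : Type*} [Field K]

/-- The alternating ratio of the values of `W` at the six neighbours of `(a, b, c)` in the plane
`a + b + c = n`. Both the triple ratio and its expression through minors are of this form. -/
def hexRatio (W : ℕ → ℕ → ℕ → K) (a b c : ℕ) : K :=
  (W (a - 1) b (c + 1) * W a (b + 1) (c - 1) * W (a + 1) (b - 1) c) /
    (W (a + 1) b (c - 1) * W a (b - 1) (c + 1) * W (a - 1) (b + 1) c)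

lemma hexRatio_congr {n : ℕ} {W W' : ℕ → ℕ → ℕ → K}
    (h : ∀ a b c, a + b + c = n → W a b c = W' a b c) {a b c : ℕ}
    (ha : 1 ≤ a) (hb : 1 ≤ b) (hc : 1 ≤ c) (habc : a + b + c = n) :
    hexRatio W a b c = hexRatio W' a b c := by
  unfold hexRatio
  rw [h (a - 1) b (c + 1) (by omega), h a (b + 1) (c - 1) (by omega),
    h (a + 1) (b - 1) c (by omega), h (a + 1) b (c - 1) (by omega),
    h a (b - 1) (c + 1) (by omega), h (a - 1) (b + 1) c (by omega)]

lemma hexRatio_mul_gauge {p q r : ℕ → K} (hp : ∀ k, p k ≠ 0) (hq : ∀ k, q k ≠ 0)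
    (hr : ∀ k, r k ≠ 0) (W : ℕ → ℕ → ℕ → K) (a b c : ℕ) :
    hexRatio (fun a b c => p a * q b * r c * W a b c) a b c = hexRatio W a b c := by
  let common := p (a - 1) * p a * p (a + 1) * (q (b - 1) * q b * q (b + 1)) *
    (r (c - 1) * r c * r (c + 1))
  have common_ne_zero : common ≠ 0 := by simp [common, hp, hq, hr]
  rw [eq_comm, hexRatio, hexRatio, ← mul_div_mul_left _ _ common_ne_zero]
  congr 1 <;> simp only [common] <;> ring

-- Among the six values entering the ratio at `(a, b, c)`, the one with the largest second index
-- and then the largest first index, `W a (b + 1) (c - 1)`, is determined by the other five.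
lemma eq_of_hexRatio_eq {n : ℕ} {W W' : ℕ → ℕ → ℕ → K}
    (hW' : ∀ a b c, a + b + c = n → W' a b c ≠ 0)
    (h_low : ∀ a b c, b ≤ 1 → a + b + c = n → W a b c = W' a b c)
    (h_side : ∀ b c, b + c = n → W 0 b c = W' 0 b c)
    (h_ratio : ∀ a b c, 1 ≤ a → 1 ≤ b → 1 ≤ c → a + b + c = n →
      hexRatio W a b c = hexRatio W' a b c)
    (b a c : ℕ) (h : a + b + c = n) : W a b c = W' a b c := by
  induction b using Nat.strong_induction_on generalizing a c with
  | _ b ih_b =>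
  induction a generalizing c with
  | zero => exact h_side b c (by omega)
  | succ a ih_a =>
    match b, ih_b, ih_a, h with
    | 0, _, _, h => exact h_low _ _ _ (by omega) h
    | 1, _, _, h => exact h_low _ _ _ le_rfl h
    | b + 2, ih_b, ih_a, h =>
      have h_eq := h_ratio (a + 1) (b + 1) (c + 1) (by omega) (by omega) (by omega) (by omega)
      simp only [hexRatio, Nat.add_sub_cancel, add_assoc, Nat.reduceAdd] at h_eq
      rw [ih_b (b + 1) (by omega) a (c + 2) (by omega),
        ih_b b (by omega) (a + 2) (c + 1) (by omega),
        ih_b (b + 1) (by omega) (a + 2) c (by omega),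
        ih_b b (by omega) (a + 1) (c + 2) (by omega), ih_a (c + 1) (by omega)] at h_eq
      have h₁ := hW' a (b + 1) (c + 2) (by omega)
      have h₂ := hW' (a + 2) b (c + 1) (by omega)
      have h₃ := hW' (a + 2) (b + 1) c (by omega)
      have h₄ := hW' (a + 1) b (c + 2) (by omega)
      have h₅ := hW' a (b + 2) (c + 1) (by omega)
      field_simp at h_eq
      exact h_eq

/-- The solution of `hexRatio W = x` with `W a b c` independent of `c` and equal to `1` when
`a = 0` or `b ≤ 1`. -/
def hexSolution (x : ℕ → ℕ → K) (a b : ℕ) : K :=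
  ∏ i ∈ Finset.range a, ∏ j ∈ Finset.range b, ∏ k ∈ Finset.range j, x (i + 1 + k) (j - k)

lemma hexSolution_zero_right (x : ℕ → ℕ → K) (a : ℕ) : hexSolution x a 0 = 1 := by
  simp [hexSolution]

lemma hexSolution_ne_zero {n : ℕ} {x : ℕ → ℕ → K}
    (hx : ∀ a b, 1 ≤ a → 1 ≤ b → a + b < n → x a b ≠ 0) {a b : ℕ} (hab : a + b ≤ n) :
    hexSolution x a b ≠ 0 := by
  simp only [hexSolution, Finset.prod_ne_zero_iff, Finset.mem_range]
  exact fun i hi j hj k hk => hx _ _ (by omega) (by omega) (by omega)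

-- With `V a b = W a b / W (a - 1) b` and `Y a b = V a (b + 1) / V a b`, the equation
-- `hexRatio W = x` becomes `Y a b = x a b * Y (a + 1) (b - 1)`.
lemma hexRatio_hexSolution {n : ℕ} {x : ℕ → ℕ → K}
    (hx : ∀ a b, 1 ≤ a → 1 ≤ b → a + b < n → x a b ≠ 0) {a b c : ℕ}
    (ha : 1 ≤ a) (hb : 1 ≤ b) (hc : 1 ≤ c) (habc : a + b + c = n) :
    hexRatio (fun a b _ => hexSolution x a b) a b c = x a b := by
  obtain ⟨a, rfl⟩ := Nat.exists_eq_add_of_le' ha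
  obtain ⟨b, rfl⟩ := Nat.exists_eq_add_of_le' hb
  let Y : ℕ → ℕ → K := fun a b => ∏ k ∈ Finset.range b, x (a + k) (b - k)
  let V : ℕ → ℕ → K := fun a b => ∏ j ∈ Finset.range b, Y a j
  have W_succ : ∀ a b, hexSolution x (a + 1) b = hexSolution x a b * V (a + 1) b :=
    fun a b => Finset.prod_range_succ _ _
  have V_succ : ∀ a b, V a (b + 1) = V a b * Y a b := fun a b => Finset.prod_range_succ _ _
  have Y_succ : ∀ a b, Y a (b + 1) = Y (a + 1) b * x a (b + 1) := fun a b => by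
    simp only [Y, Finset.prod_range_succ', Nat.add_sub_add_right, add_zero, Nat.sub_zero]
    simp only [add_assoc, add_comm 1]
  have hW : ∀ {a b}, a + b ≤ n → hexSolution x a b ≠ 0 := hexSolution_ne_zero hx
  have hW₀ := hW (a := a) (b := b) (by omega)
  have hW₁ := hW (a := a) (b := b + 2) (by omega)
  have h_prod := hW (a := a + 2) (b := b + 1) (by omega)
  simp only [W_succ, V_succ, mul_ne_zero_iff] at h_prod
  obtain ⟨⟨hW₂, hV₁, hY₁⟩, hV₂, hY₂⟩ := h_prod
  simp only [hexRatio, Nat.add_sub_cancel, W_succ, V_succ, Y_succ]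
  field_simp

end HexRatio

section SolidMinor

variable {R K : Type*} [CommRing R] [Field K]

/-- The minor of `M` on the rows `a, …, a + b - 1` and the columns `0, …, b - 1`. -/
def solidMinor (M : ℕ → ℕ → R) (a b : ℕ) : R :=
  (Matrix.of fun i j : Fin b => M (a + i) j).det

/-- `solidMinor M a (b + 1)` with the bottom right entry of the submatrix replaced by zero. -/
def corneredMinor (M : ℕ → ℕ → R) (a b : ℕ) : R :=
  (Matrix.of fun i j : Fin (b + 1) => if (i : ℕ) = b ∧ (j : ℕ) = b then 0 else M (a + i) j).det

lemma solidMinor_zero_right (M : ℕ → ℕ → R) (a : ℕ) : solidMinor M a 0 = 1 :=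
  Matrix.det_fin_zero

lemma solidMinor_one_right (M : ℕ → ℕ → R) (a : ℕ) : solidMinor M a 1 = M a 0 := by
  simp [solidMinor]

lemma solidMinor_zero_left_of_unitriangular {M : ℕ → ℕ → R} {n : ℕ}
    (h_upper : ∀ r j, r < j → j < n → M r j = 0) (h_diag : ∀ j, j < n → M j j = 1) :
    solidMinor M 0 n = 1 := by
  have h_triangular : (Matrix.of fun i j : Fin n => M (0 + i) j).IsLowerTriangular :=
    fun i j hij => by simpa using h_upper i j hij j.2
  rw [solidMinor, Matrix.det_of_isLowerTriangular _ h_triangular]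
  exact Finset.prod_eq_one fun i _ => by simpa using h_diag i i.2

lemma solidMinor_succ (M : ℕ → ℕ → R) (a b : ℕ) :
    solidMinor M a (b + 1) = M (a + b) b * solidMinor M a b + corneredMinor M a b := by
  have h_even : (-1 : R) ^ (b + b) = 1 := by simp [← two_mul]
  rw [solidMinor, corneredMinor, Matrix.det_succ_row _ (Fin.last b),
    Matrix.det_succ_row _ (Fin.last b), Fin.sum_univ_castSucc, Fin.sum_univ_castSucc, solidMinor]
  simp only [Matrix.of_apply, Fin.val_last, Fin.val_castSucc, true_and, h_even, if_true, mul_zero,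
    zero_mul, add_zero, one_mul]
  rw [add_comm]
  congr 1
  · congr 2
    ext i k
    simp
  · refine Finset.sum_congr rfl fun k _ => ?_
    rw [if_neg k.2.ne]
    congr 2
    ext i l
    simp [i.2.ne]

lemma corneredMinor_congr {M M' : ℕ → ℕ → R} {a b : ℕ}
    (h : ∀ i j, i ≤ b → j ≤ b → ¬(i = b ∧ j = b) → M (a + i) j = M' (a + i) j) :
    corneredMinor M a b = corneredMinor M' a b := by
  unfold corneredMinor
  congr 2
  ext i j
  split_ifs with hij
  · rfl
  · exact h i j (by omega) (by omega) hij

lemma eq_of_solidMinor_eq {n : ℕ} {M M' : ℕ → ℕ → K}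
    (h_upper : ∀ r j, r < j → j < n → M r j = M' r j)
    (h_ne : ∀ a b, a + b ≤ n → solidMinor M' a b ≠ 0)
    (h_eq : ∀ a b, a + b ≤ n → solidMinor M a b = solidMinor M' a b)
    (j r : ℕ) (hj : j < n) (hr : r < n) : M r j = M' r j := by
  induction j using Nat.strong_induction_on generalizing r with
  | _ j ih_j =>
  induction r using Nat.strong_induction_on with
  | _ r ih_r =>
  obtain h | h := Nat.lt_or_ge r j
  · exact h_upper r j h hj
  obtain ⟨a, rfl⟩ := Nat.exists_eq_add_of_le' h
  have h_cornered : corneredMinor M a j = corneredMinor M' a j := by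
    refine corneredMinor_congr fun i k hi hk hik => ?_
    obtain hkj | rfl := hk.lt_or_eq
    · exact ih_j k hkj (a + i) (by omega) (by omega)
    · exact ih_r (a + i) (by omega) (by omega)
  have h_minor := h_eq a (j + 1) (by omega)
  rw [solidMinor_succ, solidMinor_succ, h_cornered, h_eq a j (by omega)] at h_minor
  exact mul_right_cancel₀ (h_ne a j (by omega)) (add_right_cancel h_minor)

/-- The lower triangular matrix whose solid minors are prescribed by `D`: the entry `(r, j)` is
solved for from the minor whose bottom right corner it is. -/
def matrixOfSolidMinors (D : ℕ → ℕ → K) (r j : ℕ) : K :=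
  if j ≤ r then
    (D (r - j) (j + 1) - (Matrix.of fun i k : Fin (j + 1) => if _ : (i : ℕ) = j ∧ (k : ℕ) = j then 0
      else matrixOfSolidMinors D (r - j + i) k).det) / D (r - j) j
  else 0
termination_by (r, j)
decreasing_by rw [Prod.lex_def]; omega

lemma solidMinor_matrixOfSolidMinors {n : ℕ} {D : ℕ → ℕ → K} (hD₀ : ∀ a, D a 0 = 1)
    (hD : ∀ a b, a + b ≤ n → D a b ≠ 0) {a b : ℕ} (hab : a + b ≤ n) :
    solidMinor (matrixOfSolidMinors D) a b = D a b := by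
  induction b with
  | zero => rw [solidMinor_zero_right, hD₀]
  | succ b ih =>
    have h_entry : matrixOfSolidMinors D (a + b) b =
        (D a (b + 1) - corneredMinor (matrixOfSolidMinors D) a b) / D a b := by
      rw [matrixOfSolidMinors, if_pos (Nat.le_add_left b a), Nat.add_sub_cancel, corneredMinor]
      simp only [dite_eq_ite]
    rw [solidMinor_succ, ih (by omega), h_entry, div_mul_cancel₀ _ (hD a b (by omega)),
      sub_add_cancel]

end SolidMinor

section WedgeDet

variable {d n₁ n₂ n₃ : ℕ}

/-- The positions of three concatenated families inside `Fin d`. -/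
def blockEquiv (h : n₁ + n₂ + n₃ = d) : (Fin n₁ ⊕ Fin n₂) ⊕ Fin n₃ ≃ Fin d :=
  ((finSumFinEquiv.sumCongr (Equiv.refl _)).trans finSumFinEquiv).trans (finCongr h)

/-- The matrix whose columns are three concatenated families of vectors, with rows and columns
indexed by the three blocks. -/
def blockMatrix (h : n₁ + n₂ + n₃ = d) (u : Fin n₁ → Vec d) (v : Fin n₂ → Vec d)
    (w : Fin n₃ → Vec d) :
    Matrix ((Fin n₁ ⊕ Fin n₂) ⊕ Fin n₃) ((Fin n₁ ⊕ Fin n₂) ⊕ Fin n₃) ℝ :=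
  Matrix.of fun i j => Sum.elim (Sum.elim u v) w j (blockEquiv h i)

lemma wedgeDet_eq_det_blockMatrix (h : n₁ + n₂ + n₃ = d) (u : Fin n₁ → Vec d)
    (v : Fin n₂ → Vec d) (w : Fin n₃ → Vec d) :
    wedgeDet u v w = (blockMatrix h u v w).det := by
  rw [wedgeDet, dif_pos h, ← Matrix.det_submatrix_equiv_self (blockEquiv h)]
  subst h
  congr 1
  ext i ((j | j) | j) <;> simp [blockMatrix, blockEquiv]

lemma wedgeDet_eq_basis_det (h : n₁ + n₂ + n₃ = d) (u : Fin n₁ → Vec d) (v : Fin n₂ → Vec d)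
    (w : Fin n₃ → Vec d) :
    wedgeDet u v w =
      (Pi.basisFun ℝ (Fin d)).det (Sum.elim (Sum.elim u v) w ∘ (blockEquiv h).symm) := by
  rw [wedgeDet_eq_det_blockMatrix h, Module.Basis.det_apply,
    ← Matrix.det_submatrix_equiv_self (blockEquiv h).symm]
  congr 1
  ext i j
  simp [blockMatrix, Module.Basis.toMatrix_apply]

lemma wedgeDet_map (h : n₁ + n₂ + n₃ = d) (T : Vec d →ₗ[ℝ] Vec d) (u : Fin n₁ → Vec d)
    (v : Fin n₂ → Vec d) (w : Fin n₃ → Vec d) :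
    wedgeDet (T ∘ u) (T ∘ v) (T ∘ w) = LinearMap.det T * wedgeDet u v w := by
  rw [wedgeDet_eq_basis_det h, wedgeDet_eq_basis_det h, ← Module.Basis.det_comp,
    ← Function.comp_assoc, Sum.comp_elim, Sum.comp_elim]

lemma wedgeDet_ne_zero_iff (h : n₁ + n₂ + n₃ = d) (u : Fin n₁ → Vec d) (v : Fin n₂ → Vec d)
    (w : Fin n₃ → Vec d) :
    wedgeDet u v w ≠ 0 ↔ Submodule.span ℝ (Set.range u) ⊔ Submodule.span ℝ (Set.range v) ⊔
      Submodule.span ℝ (Set.range w) = ⊤ := by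
  have h_range : Set.range (Sum.elim (Sum.elim u v) w ∘ (blockEquiv h).symm) =
      Set.range u ∪ Set.range v ∪ Set.range w := by
    rw [(blockEquiv h).symm.surjective.range_comp, Set.Sum.elim_range, Set.Sum.elim_range]
  rw [wedgeDet_eq_basis_det h, ← isUnit_iff_ne_zero, ← Module.Basis.is_basis_iff_det,
    ← Submodule.span_union, ← Submodule.span_union, ← h_range]
  refine ⟨And.right, fun h_span => ⟨?_, h_span⟩⟩
  exact linearIndependent_of_top_le_span_of_card_eq_finrank h_span.ge (by simp)

lemma wedgeDet_change_frames (h : n₁ + n₂ + n₃ = d) {u u' : Fin n₁ → Vec d}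
    {v v' : Fin n₂ → Vec d} {w w' : Fin n₃ → Vec d} {P : Matrix (Fin n₁) (Fin n₁) ℝ}
    {Q : Matrix (Fin n₂) (Fin n₂) ℝ} {R : Matrix (Fin n₃) (Fin n₃) ℝ}
    (hu : ∀ i, u' i = ∑ j, P j i • u j) (hv : ∀ i, v' i = ∑ j, Q j i • v j)
    (hw : ∀ i, w' i = ∑ j, R j i • w j) :
    wedgeDet u' v' w' = P.det * Q.det * R.det * wedgeDet u v w := by
  have h_mul : blockMatrix h u' v' w' = blockMatrix h u v w *
      Matrix.fromBlocks (Matrix.fromBlocks P 0 0 Q) 0 0 R := by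
    ext i ((j | j) | j) <;> simp [blockMatrix, Matrix.mul_apply, hu, hv, hw, mul_comm]
  rw [wedgeDet_eq_det_blockMatrix h, wedgeDet_eq_det_blockMatrix h, h_mul, Matrix.det_mul,
    Matrix.det_fromBlocks_zero₂₁, Matrix.det_fromBlocks_zero₂₁, mul_comm]

lemma exists_change_frame_matrix {K V ι : Type*} [Field K] [AddCommGroup V] [Module K V]
    [Fintype ι] [DecidableEq ι] {u u' : ι → V} (hu' : LinearIndependent K u')
    (h_span : Submodule.span K (Set.range u') ≤ Submodule.span K (Set.range u)) :
    ∃ P : Matrix ι ι K, P.det ≠ 0 ∧ ∀ i, u' i = ∑ j, P j i • u j := by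
  have h_mem : ∀ i, ∃ c : ι → K, ∑ j, c j • u j = u' i := fun i =>
    (Submodule.mem_span_range_iff_exists_fun K).1 (h_span (Submodule.subset_span ⟨i, rfl⟩))
  choose c hc using h_mem
  have h_comp : Fintype.linearCombination K u ∘ c = u' :=
    funext fun i => by simp [Fintype.linearCombination_apply, hc]
  have h_indep : LinearIndependent K c := by
    rw [← h_comp] at hu'
    exact hu'.of_comp
  refine ⟨(Matrix.of c).transpose, ?_, fun i => (hc i).symm⟩
  rw [Matrix.det_transpose, ← isUnit_iff_ne_zero, ← Matrix.isUnit_iff_isUnit_det]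
  exact Matrix.linearIndependent_rows_iff_isUnit.1 h_indep

end WedgeDet

section TripleRatio

variable {d : ℕ}

lemma tripleRatio_eq_hexRatio (e f g : (k : ℕ) → Fin k → Vec d) (a b c : ℕ) :
    tripleRatio a b c e f g = hexRatio (fun a b c => wedgeDet (e a) (f b) (g c)) a b c :=
  rfl

lemma ChoiceFor.linearIndependent {F : ℕ → Submodule ℝ (Vec d)} {e : (k : ℕ) → Fin k → Vec d}
    (he : ChoiceFor F e) (hF : IsFlag F) {k : ℕ} (hk : k ≤ d) : LinearIndependent ℝ (e k) := by
  rw [linearIndependent_iff_card_eq_finrank_span, Set.finrank, he k hk, hF.2 k hk, Fintype.card_fin]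

lemma ChoiceFor.exists_change {F : ℕ → Submodule ℝ (Vec d)} {e e' : (k : ℕ) → Fin k → Vec d}
    (he : ChoiceFor F e) (he' : ChoiceFor F e') (hF : IsFlag F) :
    ∃ P : (k : ℕ) → Matrix (Fin k) (Fin k) ℝ,
      (∀ k, (P k).det ≠ 0) ∧ ∀ k ≤ d, ∀ i, e' k i = ∑ j, P k j i • e k j := by
  have h_each : ∀ k, ∃ P : Matrix (Fin k) (Fin k) ℝ,
      P.det ≠ 0 ∧ (k ≤ d → ∀ i, e' k i = ∑ j, P j i • e k j) := fun k => by
    by_cases hk : k ≤ d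
    · obtain ⟨P, hP, h⟩ := exists_change_frame_matrix (he'.linearIndependent hF hk)
        ((he' k hk).trans (he k hk).symm).le
      exact ⟨P, hP, fun _ => h⟩
    · exact ⟨1, by simp, fun h => absurd h hk⟩
  choose P hP h using h_each
  exact ⟨P, hP, h⟩

lemma ChoiceFor.tripleRatio_eq {E F G : ℕ → Submodule ℝ (Vec d)}
    {e f g e' f' g' : (k : ℕ) → Fin k → Vec d} (hE : IsFlag E) (hF : IsFlag F) (hG : IsFlag G)
    (he : ChoiceFor E e) (hf : ChoiceFor F f) (hg : ChoiceFor G g)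
    (he' : ChoiceFor E e') (hf' : ChoiceFor F f') (hg' : ChoiceFor G g') {a b c : ℕ}
    (ha : 1 ≤ a) (hb : 1 ≤ b) (hc : 1 ≤ c) (habc : a + b + c = d) :
    tripleRatio a b c e' f' g' = tripleRatio a b c e f g := by
  obtain ⟨P, hP, heP⟩ := he.exists_change he' hE
  obtain ⟨Q, hQ, hfQ⟩ := hf.exists_change hf' hF
  obtain ⟨R, hR, hgR⟩ := hg.exists_change hg' hG
  simp only [tripleRatio_eq_hexRatio]
  refine (hexRatio_congr (fun a b c h => ?_) ha hb hc habc).trans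
    (hexRatio_mul_gauge hP hQ hR _ a b c)
  exact wedgeDet_change_frames h (heP a (by omega)) (hfQ b (by omega)) (hgR c (by omega))

end TripleRatio

section SpanProperties

variable {d : ℕ}

lemma finrank_sup_add_finrank_le {K V : Type*} [DivisionRing K] [AddCommGroup V] [Module K V]
    [FiniteDimensional K V] {A A' : Submodule K V} (hA : A ≤ A') (B : Submodule K V) :
    Module.finrank K ↥(A' ⊔ B) + Module.finrank K A ≤
      Module.finrank K ↥(A ⊔ B) + Module.finrank K A' := by
  have h_inf := Submodule.finrank_mono (inf_le_inf_right B hA)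
  have h_small := Submodule.finrank_sup_add_finrank_inf_eq A B
  have h_large := Submodule.finrank_sup_add_finrank_inf_eq A' B
  omega

lemma IsFlag.zero_eq_bot {F : ℕ → Submodule ℝ (Vec d)} (hF : IsFlag F) : F 0 = ⊥ :=
  Submodule.finrank_eq_zero.1 (hF.2 0 d.zero_le)

lemma IsFlag.span_range_eq {F : ℕ → Submodule ℝ (Vec d)} (hF : IsFlag F) {k : ℕ} (hk : k ≤ d)
    {u : Fin k → Vec d} (hu : LinearIndependent ℝ u) (h_mem : ∀ i, u i ∈ F k) :
    Submodule.span ℝ (Set.range u) = F k := by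
  refine Submodule.eq_of_le_of_finrank_eq (Submodule.span_le.2 (Set.range_subset_iff.2 h_mem)) ?_
  rw [finrank_span_eq_card hu, Fintype.card_fin, hF.2 k hk]

lemma isFlag_of_sup_eq_top {E G : ℕ → Submodule ℝ (Vec d)} (hE : Monotone E)
    (hE_le : ∀ k, Module.finrank ℝ (E k) ≤ k) (hG_le : ∀ k, Module.finrank ℝ (G k) ≤ k)
    (h : ∀ a b, a + b = d → E a ⊔ G b = ⊤) : IsFlag E := by
  refine ⟨hE, fun k hk => (hE_le k).antisymm ?_⟩
  have h_add := Submodule.finrank_add_le_finrank_add_finrank (E k) (G (d - k))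
  rw [h k (d - k) (by omega), finrank_top, Module.finrank_fin_fun] at h_add
  have h_codim := hG_le (d - k)
  omega

lemma MaxSpan.sup_eq_top {E F G : ℕ → Submodule ℝ (Vec d)} (h : MaxSpan ![E, F, G]) {a b c : ℕ}
    (habc : a + b + c = d) : E a ⊔ F b ⊔ G c = ⊤ := by
  have h_finrank := h ![a, b, c] (by simp [Fin.forall_fin_succ]; omega)
  rw [iSup_fin_three, Fin.sum_univ_three] at h_finrank
  refine Submodule.eq_top_of_finrank_eq (h_finrank.trans ?_)
  simp [habc]

lemma maxSpan_of_sup_eq_top {E F G : ℕ → Submodule ℝ (Vec d)} (hE : IsFlag E) (hF : IsFlag F)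
    (hG : IsFlag G) (h : ∀ a b c, a + b + c = d → E a ⊔ F b ⊔ G c = ⊤) :
    MaxSpan ![E, F, G] := by
  intro n hn
  rw [iSup_fin_three, Fin.sum_univ_three]
  change Module.finrank ℝ ↥(E (n 0) ⊔ F (n 1) ⊔ G (n 2)) = _
  have h₀ := hn 0
  have h₁ := hn 1
  have h₂ := hn 2
  generalize n 0 = a at *
  generalize n 1 = b at *
  generalize n 2 = c at *
  obtain h_le | h_ge := Nat.le_total (a + b + c) d
  · rw [min_eq_left h_le]
    obtain ⟨m, hm⟩ := Nat.exists_eq_add_of_le h_le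
    have h_lower := finrank_sup_add_finrank_le (hE.1 (Nat.le_add_right a m)) (F b ⊔ G c)
    rw [← sup_assoc, ← sup_assoc, h (a + m) b c (by omega), finrank_top, Module.finrank_fin_fun,
      hE.2 a h₀, hE.2 (a + m) (by omega)] at h_lower
    have h_upper := Submodule.finrank_add_le_finrank_add_finrank (E a ⊔ F b) (G c)
    have h_upper' := Submodule.finrank_add_le_finrank_add_finrank (E a) (F b)
    rw [hE.2 a h₀, hF.2 b h₁] at h_upper'
    rw [hG.2 c h₂] at h_upper
    omega
  · have h_top : E a ⊔ F b ⊔ G c = ⊤ := by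
      rw [eq_top_iff, ← h a (min b (d - a)) (d - a - min b (d - a)) (by omega)]
      exact sup_le_sup (sup_le_sup le_rfl (hF.1 (by omega))) (hG.1 (by omega))
    rw [h_top, finrank_top, Module.finrank_fin_fun, min_eq_right h_ge]

/-- Two flags in general position: members of complementary dimensions meet only in zero. -/
def IsTransverse (E G : ℕ → Submodule ℝ (Vec d)) : Prop :=
  ∀ a b, a + b = d → Disjoint (E a) (G b)

lemma isTransverse_of_sup_eq_top {E G : ℕ → Submodule ℝ (Vec d)} (hE : IsFlag E) (hG : IsFlag G)
    (h : ∀ a b, a + b = d → E a ⊔ G b = ⊤) : IsTransverse E G := by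
  intro a b hab
  have h_add := Submodule.finrank_sup_add_finrank_inf_eq (E a) (G b)
  rw [h a b hab, finrank_top, Module.finrank_fin_fun, hE.2 a (by omega), hG.2 b (by omega)] at h_add
  exact disjoint_iff.2 (Submodule.finrank_eq_zero.1 (by omega))

lemma MaxSpan.isTransverse_left {E F G : ℕ → Submodule ℝ (Vec d)} (h : MaxSpan ![E, F, G])
    (hE : IsFlag E) (hF : IsFlag F) (hG : IsFlag G) : IsTransverse E G :=
  isTransverse_of_sup_eq_top hE hG fun a c hac => by
    simpa [hF.zero_eq_bot] using h.sup_eq_top (a := a) (b := 0) (c := c) hac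

lemma MaxSpan.isTransverse_right {E F G : ℕ → Submodule ℝ (Vec d)} (h : MaxSpan ![E, F, G])
    (hE : IsFlag E) (hF : IsFlag F) (hG : IsFlag G) : IsTransverse F G :=
  isTransverse_of_sup_eq_top hF hG fun b c hbc => by
    simpa [hE.zero_eq_bot] using h.sup_eq_top (a := 0) (b := b) (c := c) (by omega)

end SpanProperties

section StandardFrames

variable {d : ℕ}

/-- The frames of a flag given by the initial segments of a sequence of vectors. -/
def leadingFrame (v : ℕ → Vec d) (k : ℕ) : Fin k → Vec d := fun i => v i

/-- The frames of a flag given by the final segments of a sequence of `d` vectors. -/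
def trailingFrame (v : ℕ → Vec d) (k : ℕ) : Fin k → Vec d := fun i => v (d - k + i)

/-- The columns, cut off after `d` entries, of an infinite array. -/
def arrayColumn (M : ℕ → ℕ → ℝ) (j : ℕ) : Vec d := fun r => M r j

/-- The standard basis of `ℝ^d`, indexed by `ℕ` and continued by zero. -/
def stdVector (i : ℕ) : Vec d := fun r => if (r : ℕ) = i then 1 else 0

/-- The subspaces spanned by a system of frames. -/
def spanFlag (e : (k : ℕ) → Fin k → Vec d) (k : ℕ) : Submodule ℝ (Vec d) :=
  Submodule.span ℝ (Set.range (e k))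

lemma finrank_spanFlag_le (e : (k : ℕ) → Fin k → Vec d) (k : ℕ) :
    Module.finrank ℝ (spanFlag e k) ≤ k :=
  (finrank_range_le_card (e k)).trans_eq (Fintype.card_fin k)

lemma spanFlag_zero (e : (k : ℕ) → Fin k → Vec d) : spanFlag e 0 = ⊥ := by
  simp [spanFlag, Set.range_eq_empty]

lemma monotone_spanFlag_leadingFrame (v : ℕ → Vec d) : Monotone (spanFlag (leadingFrame v)) :=
  fun k l hkl => Submodule.span_mono <| Set.range_subset_iff.2 fun i =>
    ⟨⟨i, by omega⟩, rfl⟩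

lemma monotone_spanFlag_trailingFrame (v : ℕ → Vec d) : Monotone (spanFlag (trailingFrame v)) :=
  fun k l hkl => Submodule.span_mono <| Set.range_subset_iff.2 fun i =>
    ⟨⟨d - k + i - (d - l), by omega⟩, congrArg v (Nat.add_sub_cancel' (by omega))⟩

-- With respect to the blocks of sizes `a`, `b`, `c` the matrix of the three frames is
-- `[1 * 0; 0 S 0; 0 * 1]`, where `S` is the submatrix defining `solidMinor M a b`.
lemma wedgeDet_standard (M : ℕ → ℕ → ℝ) {a b c : ℕ} (h : a + b + c = d) :
    wedgeDet (d := d) (leadingFrame stdVector a) (leadingFrame (arrayColumn M) b)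
      (trailingFrame stdVector c) = solidMinor M a b := by
  have h_blocks : blockMatrix h (leadingFrame stdVector a) (leadingFrame (arrayColumn M) b)
      (trailingFrame stdVector c) =
      Matrix.fromBlocks (Matrix.fromBlocks 1 (Matrix.of fun (i : Fin a) (j : Fin b) => M i j) 0
        (Matrix.of fun i j : Fin b => M (a + i) j)) 0
        (Matrix.of fun (i : Fin c) (j : Fin a ⊕ Fin b) =>
          Sum.elim 0 (fun k : Fin b => M (a + b + i) k) j) 1 := by
    subst h
    ext ((i | i) | i) ((j | j) | j) <;>
      simp [blockMatrix, blockEquiv, leadingFrame, trailingFrame, stdVector, arrayColumn,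
        Matrix.one_apply, Fin.ext_iff] <;> omega
  rw [wedgeDet_eq_det_blockMatrix h, h_blocks, Matrix.det_fromBlocks_zero₁₂,
    Matrix.det_fromBlocks_zero₂₁, Matrix.det_one, Matrix.det_one, one_mul, mul_one, solidMinor]

/-- A linear isomorphism carrying the standard frames, with the middle one given by the columns of
`M`, to frames of the three flags. -/
structure Standardizes (T : Vec d ≃ₗ[ℝ] Vec d) (M : ℕ → ℕ → ℝ)
    (E F G : ℕ → Submodule ℝ (Vec d)) : Prop where
  choiceFor_left : ChoiceFor E fun k => T ∘ leadingFrame stdVector k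
  choiceFor_middle : ChoiceFor F fun k => T ∘ leadingFrame (arrayColumn M) k
  choiceFor_right : ChoiceFor G fun k => T ∘ trailingFrame stdVector k

lemma wedgeDet_map_standard (T : Vec d ≃ₗ[ℝ] Vec d) (M : ℕ → ℕ → ℝ) {a b c : ℕ}
    (h : a + b + c = d) :
    wedgeDet (T ∘ leadingFrame stdVector a) (T ∘ leadingFrame (arrayColumn M) b)
      (T ∘ trailingFrame stdVector c) =
      LinearMap.det (T : Vec d →ₗ[ℝ] Vec d) * solidMinor M a b := by
  rw [← wedgeDet_standard M h]
  exact wedgeDet_map h (T : Vec d →ₗ[ℝ] Vec d) _ _ _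

lemma tripleRatio_map_standard (T : Vec d ≃ₗ[ℝ] Vec d) (M : ℕ → ℕ → ℝ) {a b c : ℕ}
    (ha : 1 ≤ a) (hb : 1 ≤ b) (hc : 1 ≤ c) (habc : a + b + c = d) :
    tripleRatio a b c (fun k => T ∘ leadingFrame stdVector k)
      (fun k => T ∘ leadingFrame (arrayColumn M) k) (fun k => T ∘ trailingFrame stdVector k) =
      hexRatio (fun a b _ => solidMinor M a b) a b c := by
  have h_gauge := hexRatio_mul_gauge (p := fun _ => LinearMap.det (T : Vec d →ₗ[ℝ] Vec d))
    (q := 1) (r := 1) (fun _ => T.isUnit_det'.ne_zero) (fun _ => one_ne_zero)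
    (fun _ => one_ne_zero) (fun a b _ => solidMinor M a b) a b c
  rw [tripleRatio_eq_hexRatio, ← h_gauge]
  refine hexRatio_congr (fun a b c h => ?_) ha hb hc habc
  simp only [wedgeDet_map_standard T M h, Pi.one_apply, mul_one]

lemma Standardizes.solidMinor_ne_zero {T : Vec d ≃ₗ[ℝ] Vec d} {M : ℕ → ℕ → ℝ}
    {E F G : ℕ → Submodule ℝ (Vec d)} (hT : Standardizes T M E F G) (h : MaxSpan ![E, F, G])
    {a b : ℕ} (hab : a + b ≤ d) : solidMinor M a b ≠ 0 := by
  have habc : a + b + (d - a - b) = d := by omega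
  refine right_ne_zero_of_mul (a := LinearMap.det (T : Vec d →ₗ[ℝ] Vec d)) ?_
  rw [← wedgeDet_map_standard T M habc, wedgeDet_ne_zero_iff habc,
    hT.choiceFor_left a (by omega), hT.choiceFor_middle b (by omega),
    hT.choiceFor_right _ (by omega), h.sup_eq_top habc]

end StandardFrames

section NormalForm

variable {d : ℕ}

/-- A basis adapted to two flags: up to scaling, its `i`-th vector spans the line in which
`E (i + 1)` meets `G (d - i)` when the flags are transverse. -/
def IsAdaptedBasis (E G : ℕ → Submodule ℝ (Vec d)) (b : Module.Basis (Fin d) ℝ (Vec d)) : Prop :=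
  ∀ i : Fin d, b i ∈ E (i + 1) ⊓ G (d - i)

lemma linearIndependent_of_mem_of_notMem {K V : Type*} [DivisionRing K] [AddCommGroup V]
    [Module K V] {n : ℕ} {E : ℕ → Submodule K V} (hE : Monotone E) {v : Fin n → V}
    (h_mem : ∀ i : Fin n, v i ∈ E (i + 1)) (h_notMem : ∀ i : Fin n, v i ∉ E i) :
    LinearIndependent K v := by
  induction n with
  | zero => exact linearIndependent_empty_type
  | succ n ih =>
    rw [linearIndependent_finSucc']
    refine ⟨ih (fun i => h_mem i.castSucc) fun i => h_notMem i.castSucc, fun h_last =>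
      h_notMem (Fin.last n) (Submodule.span_le.2 (Set.range_subset_iff.2 fun i => ?_) h_last)⟩
    exact hE i.2 (h_mem i.castSucc)

lemma IsTransverse.exists_isAdaptedBasis {E G : ℕ → Submodule ℝ (Vec d)} (h : IsTransverse E G)
    (hE : IsFlag E) (hG : IsFlag G) : ∃ b, IsAdaptedBasis E G b := by
  have h_ne_bot : ∀ i : Fin d, E (i + 1) ⊓ G (d - i) ≠ ⊥ := fun i h_bot => by
    have h_add := Submodule.finrank_sup_add_finrank_inf_eq (E (i + 1)) (G (d - i))
    have h_le := Submodule.finrank_le (E (i + 1) ⊔ G (d - i))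
    rw [h_bot, finrank_bot, hE.2 _ (by omega), hG.2 _ (by omega)] at h_add
    rw [Module.finrank_fin_fun] at h_le
    omega
  choose v hv hv_ne using fun i => Submodule.exists_mem_ne_zero_of_ne_bot (h_ne_bot i)
  have h_indep : LinearIndependent ℝ v :=
    linearIndependent_of_mem_of_notMem hE.1 (fun i => (hv i).1) fun i hi =>
      hv_ne i (Submodule.disjoint_def.1 (h i (d - i) (by omega)) _ hi (hv i).2)
  exact ⟨basisOfLinearIndependentOfCardEqFinrank' v h_indep (by simp), fun i => by
    simpa using hv i⟩

namespace IsAdaptedBasis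

variable {E G : ℕ → Submodule ℝ (Vec d)} {b : Module.Basis (Fin d) ℝ (Vec d)}

lemma unitsSMul (h : IsAdaptedBasis E G b) (w : Fin d → ℝˣ) :
    IsAdaptedBasis E G (b.unitsSMul w) := fun i => by
  rw [Module.Basis.unitsSMul_apply]
  exact Submodule.smul_mem _ _ (h i)

lemma span_leading (h : IsAdaptedBasis E G b) (hE : IsFlag E) {k : ℕ} (hk : k ≤ d) :
    Submodule.span ℝ (Set.range (b ∘ Fin.castLE hk)) = E k :=
  hE.span_range_eq hk (b.linearIndependent.comp _ (Fin.castLE_injective hk))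
    fun i => hE.1 i.2 (h (Fin.castLE hk i)).1

lemma span_trailing (h : IsAdaptedBasis E G b) (hG : IsFlag G) {k : ℕ} (hk : k ≤ d) :
    Submodule.span ℝ (Set.range fun i : Fin k => b ⟨d - k + i, by omega⟩) = G k := by
  refine hG.span_range_eq hk (b.linearIndependent.comp _ fun i j hij => ?_)
    fun i => hG.1 (show d - (d - k + i) ≤ k by omega) (h ⟨d - k + i, by omega⟩).2
  simpa [Fin.ext_iff] using hij

lemma mem_right_iff (h : IsAdaptedBasis E G b) (hG : IsFlag G) {k l : ℕ} (hkl : k + l = d)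
    {x : Vec d} : x ∈ G l ↔ ∀ i : Fin d, i < k → b.repr x i = 0 := by
  refine ⟨fun hx i hi => ?_, fun hx => ?_⟩
  · have h_le : G l ≤ LinearMap.ker (b.coord i) := by
      rw [← h.span_trailing hG (show l ≤ d by omega), Submodule.span_le, Set.range_subset_iff]
      intro j
      simp [Finsupp.single_apply, Fin.ext_iff]
      omega
    exact h_le hx
  · rw [← b.sum_repr x]
    refine Submodule.sum_mem _ fun i _ => ?_
    obtain hi | hi := Nat.lt_or_ge i k
    · simp [hx i hi]
    · exact Submodule.smul_mem _ _ (hG.1 (by omega) (h i).2)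

lemma repr_ne_zero_of_mem {F : ℕ → Submodule ℝ (Vec d)} (h : IsAdaptedBasis E G b)
    (hE : IsFlag E) (hF : IsFlag F) (hG : IsFlag G) (h_max : MaxSpan ![E, F, G]) {x : Vec d}
    (hx : x ∈ F 1) (hx_ne : x ≠ 0) (i : Fin d) : b.repr x i ≠ 0 := by
  intro h_zero
  have hx_mem : x ∈ E i ⊔ G (d - (i + 1)) := by
    rw [← b.sum_repr x]
    refine Submodule.sum_mem _ fun j _ => ?_
    obtain hj | hj | hj := lt_trichotomy j i
    · exact Submodule.smul_mem _ _ (Submodule.mem_sup_left (hE.1 hj (h j).1))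
    · simp [hj, h_zero]
    · exact Submodule.smul_mem _ _ (Submodule.mem_sup_right (hG.1 (by omega) (h j).2))
  have h_line : F 1 ≤ E i ⊔ G (d - (i + 1)) := by
    rw [← hF.span_range_eq (u := fun _ : Fin 1 => x) i.pos (linearIndependent_unique_iff.2 hx_ne)
      fun _ => hx]
    exact Submodule.span_le.2 (Set.range_subset_iff.2 fun _ => hx_mem)
  have h_top : E i ⊔ G (d - (i + 1)) = ⊤ := by
    rw [eq_top_iff, ← h_max.sup_eq_top (a := i) (b := 1) (c := d - (i + 1)) (by omega)]
    exact sup_le (sup_le le_sup_left h_line) le_sup_right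
  have h_add := Submodule.finrank_add_le_finrank_add_finrank (E i) (G (d - (i + 1)))
  rw [h_top, finrank_top, Module.finrank_fin_fun, hE.2 i (by omega), hG.2 _ (by omega)] at h_add
  omega

lemma repr_eq_zero_of_lt {F : ℕ → Submodule ℝ (Vec d)} {c : Module.Basis (Fin d) ℝ (Vec d)}
    (hb : IsAdaptedBasis E G b) (hc : IsAdaptedBasis F G c) (hG : IsFlag G) {i j : Fin d}
    (hij : i < j) : b.repr (c j) i = 0 :=
  (hb.mem_right_iff hG (by omega)).1 (hc j).2 i hij

lemma repr_self_ne_zero {F : ℕ → Submodule ℝ (Vec d)} {c : Module.Basis (Fin d) ℝ (Vec d)}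
    (hb : IsAdaptedBasis E G b) (hc : IsAdaptedBasis F G c) (hG : IsFlag G)
    (hFG : IsTransverse F G) (j : Fin d) : b.repr (c j) j ≠ 0 := by
  intro h_zero
  have h_mem : c j ∈ G (d - (j + 1)) := by
    refine (hb.mem_right_iff hG (k := j + 1) (by omega)).2 fun i hi => ?_
    obtain hij | rfl := (show i ≤ j from Nat.lt_succ_iff.1 hi).lt_or_eq
    · exact hb.repr_eq_zero_of_lt hc hG hij
    · exact h_zero
  exact c.ne_zero j (Submodule.disjoint_def.1 (hFG (j + 1) _ (by omega)) _ (hc j).1 h_mem)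

end IsAdaptedBasis

/-- Two bases adapted to `(E, G)` and `(F, G)` whose scaling freedom is used up, apart from a
common scalar: the transition matrix has ones on the diagonal and in the first column. -/
structure IsNormalizedPair (E F G : ℕ → Submodule ℝ (Vec d))
    (b c : Module.Basis (Fin d) ℝ (Vec d)) : Prop where
  adapted_left : IsAdaptedBasis E G b
  adapted_middle : IsAdaptedBasis F G c
  repr_self : ∀ j, b.repr (c j) j = 1
  repr_first : ∀ i j : Fin d, (j : ℕ) = 0 → b.repr (c j) i = 1

lemma MaxSpan.exists_isNormalizedPair (hd : 0 < d) {E F G : ℕ → Submodule ℝ (Vec d)}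
    (hE : IsFlag E) (hF : IsFlag F) (hG : IsFlag G) (h : MaxSpan ![E, F, G]) :
    ∃ b c, IsNormalizedPair E F G b c := by
  have hFG := h.isTransverse_right hE hF hG
  obtain ⟨b₀, hb₀⟩ := (h.isTransverse_left hE hF hG).exists_isAdaptedBasis hE hG
  obtain ⟨c₀, hc₀⟩ := hFG.exists_isAdaptedBasis hF hG
  let z : Fin d := ⟨0, hd⟩
  have hz : ∀ i, b₀.repr (c₀ z) i ≠ 0 :=
    hb₀.repr_ne_zero_of_mem hE hF hG h (hc₀ z).1 (c₀.ne_zero z)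
  let b := b₀.unitsSMul fun i => Units.mk0 _ (hz i)
  have hb : IsAdaptedBasis E G b := hb₀.unitsSMul _
  have hb_first : ∀ i, b.repr (c₀ z) i = 1 := fun i => by
    simp [b, Module.Basis.repr_unitsSMul, Units.smul_def, hz i]
  have h_diag : ∀ j, b.repr (c₀ j) j ≠ 0 := hb.repr_self_ne_zero hc₀ hG hFG
  let c := c₀.unitsSMul fun j => (Units.mk0 _ (h_diag j))⁻¹
  refine ⟨b, c, hb, hc₀.unitsSMul _, fun j => ?_, fun i j hj => ?_⟩
  · simp [c, Module.Basis.unitsSMul_apply, Units.smul_def, h_diag j]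
  · obtain rfl : j = z := Fin.ext hj
    simp [c, Module.Basis.unitsSMul_apply, hb_first]

/-- The conditions on the upper left `d × d` corner of an array that make it the transition matrix
of a normalized pair of adapted bases. -/
structure IsNormalized (d : ℕ) (M : ℕ → ℕ → ℝ) : Prop where
  upper : ∀ r j, r < j → j < d → M r j = 0
  diag : ∀ j, j < d → M j j = 1
  first : ∀ r, r < d → M r 0 = 1

/-- The transition matrix between two bases of `ℝ^d`, continued by zero to an infinite array. -/
def transitionArray (b c : Module.Basis (Fin d) ℝ (Vec d)) (r j : ℕ) : ℝ :=
  if h : r < d ∧ j < d then b.repr (c ⟨j, h.2⟩) ⟨r, h.1⟩ else 0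

lemma transitionArray_apply (b c : Module.Basis (Fin d) ℝ (Vec d)) {r j : ℕ} (hr : r < d)
    (hj : j < d) : transitionArray b c r j = b.repr (c ⟨j, hj⟩) ⟨r, hr⟩ :=
  dif_pos ⟨hr, hj⟩

lemma equivFun_symm_stdVector (b : Module.Basis (Fin d) ℝ (Vec d)) {i : ℕ} (hi : i < d) :
    b.equivFun.symm (stdVector i) = b ⟨i, hi⟩ := by
  rw [LinearEquiv.symm_apply_eq]
  ext r
  simp [stdVector, Fin.ext_iff, eq_comm]

lemma equivFun_symm_arrayColumn_transitionArray (b c : Module.Basis (Fin d) ℝ (Vec d)) {j : ℕ}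
    (hj : j < d) : b.equivFun.symm (arrayColumn (transitionArray b c) j) = c ⟨j, hj⟩ := by
  rw [LinearEquiv.symm_apply_eq]
  ext r
  simp [arrayColumn, transitionArray_apply b c r.2 hj]

lemma IsNormalizedPair.isNormalized_transitionArray {E F G : ℕ → Submodule ℝ (Vec d)}
    {b c : Module.Basis (Fin d) ℝ (Vec d)} (h : IsNormalizedPair E F G b c) (hG : IsFlag G) :
    IsNormalized d (transitionArray b c) where
  upper r j hrj hj := by
    rw [transitionArray_apply b c (hrj.trans hj) hj]
    exact h.adapted_left.repr_eq_zero_of_lt h.adapted_middle hG hrj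
  diag j hj := (transitionArray_apply b c hj hj).trans (h.repr_self _)
  first r hr := (transitionArray_apply b c hr (by omega)).trans (h.repr_first _ _ rfl)

lemma standardizes_transitionArray {E F G : ℕ → Submodule ℝ (Vec d)}
    {b c : Module.Basis (Fin d) ℝ (Vec d)} (hb : IsAdaptedBasis E G b) (hc : IsAdaptedBasis F G c)
    (hE : IsFlag E) (hF : IsFlag F) (hG : IsFlag G) :
    Standardizes b.equivFun.symm (transitionArray b c) E F G where
  choiceFor_left k hk := by
    rw [← hb.span_leading hE hk]
    congr 2
    exact funext fun i => equivFun_symm_stdVector b (by omega)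
  choiceFor_middle k hk := by
    rw [← hc.span_leading hF hk]
    congr 2
    exact funext fun i => equivFun_symm_arrayColumn_transitionArray b c (by omega)
  choiceFor_right k hk := by
    rw [← hb.span_trailing hG hk]
    congr 2
    exact funext fun i => equivFun_symm_stdVector b (by omega)

lemma MaxSpan.exists_standardizes (hd : 0 < d) {E F G : ℕ → Submodule ℝ (Vec d)}
    (hE : IsFlag E) (hF : IsFlag F) (hG : IsFlag G) (h : MaxSpan ![E, F, G]) :
    ∃ T M, IsNormalized d M ∧ Standardizes T M E F G := by
  obtain ⟨b, c, hbc⟩ := h.exists_isNormalizedPair hd hE hF hG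
  exact ⟨_, _, hbc.isNormalized_transitionArray hG,
    standardizes_transitionArray hbc.adapted_left hbc.adapted_middle hE hF hG⟩

end NormalForm

section Configurations

variable {d : ℕ}

lemma IsNormalized.solidMinor_zero_left {M : ℕ → ℕ → ℝ} (hM : IsNormalized d M) {b : ℕ}
    (hb : b ≤ d) : solidMinor M 0 b = 1 :=
  solidMinor_zero_left_of_unitriangular (fun r j hrj hj => hM.upper r j hrj (by omega))
    fun j hj => hM.diag j (by omega)

lemma IsNormalized.eq_of_hexRatio_solidMinor_eq {M M' : ℕ → ℕ → ℝ} (hM : IsNormalized d M)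
    (hM' : IsNormalized d M') (h_ne : ∀ a b, a + b ≤ d → solidMinor M' a b ≠ 0)
    (h_ratio : ∀ a b c, 1 ≤ a → 1 ≤ b → 1 ≤ c → a + b + c = d →
      hexRatio (fun a b _ => solidMinor M a b) a b c =
        hexRatio (fun a b _ => solidMinor M' a b) a b c)
    {r j : ℕ} (hr : r < d) (hj : j < d) : M r j = M' r j := by
  have h_low : ∀ a b c, b ≤ 1 → a + b + c = d → solidMinor M a b = solidMinor M' a b := by
    intro a b c hb habc
    obtain rfl | rfl := Nat.le_one_iff_eq_zero_or_eq_one.1 hb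
    · rw [solidMinor_zero_right, solidMinor_zero_right]
    · rw [solidMinor_one_right, solidMinor_one_right, hM.first a (by omega),
        hM'.first a (by omega)]
  have h_side : ∀ b c, b + c = d → solidMinor M 0 b = solidMinor M' 0 b := fun b c hbc => by
    rw [hM.solidMinor_zero_left (by omega), hM'.solidMinor_zero_left (by omega)]
  have h_minor : ∀ a b, a + b ≤ d → solidMinor M a b = solidMinor M' a b := fun a b hab =>
    eq_of_hexRatio_eq (fun a b c h => h_ne a b (by omega)) h_low h_side h_ratio
      b a (d - a - b) (by omega)
  refine eq_of_solidMinor_eq (fun r j hrj hj => ?_) h_ne h_minor j r hj hr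
  rw [hM.upper r j hrj hj, hM'.upper r j hrj hj]

lemma ChoiceFor.map_eq {F F' : ℕ → Submodule ℝ (Vec d)} {e e' : (k : ℕ) → Fin k → Vec d}
    (he : ChoiceFor F e) (he' : ChoiceFor F' e') {S : Vec d →ₗ[ℝ] Vec d} {k : ℕ} (hk : k ≤ d)
    (h : S ∘ e k = e' k) : (F k).map S = F' k := by
  rw [← he k hk, ← he' k hk, Submodule.map_span, ← Set.range_comp, h]

lemma Standardizes.map_eq {T T' : Vec d ≃ₗ[ℝ] Vec d} {M M' : ℕ → ℕ → ℝ}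
    {E F G E' F' G' : ℕ → Submodule ℝ (Vec d)} (hT : Standardizes T M E F G)
    (hT' : Standardizes T' M' E' F' G') (hM : ∀ r j, r < d → j < d → M r j = M' r j) {k : ℕ}
    (hk : k ≤ d) :
    let S : Vec d →ₗ[ℝ] Vec d := (T.symm.trans T' : Vec d ≃ₗ[ℝ] Vec d)
    (E k).map S = E' k ∧ (F k).map S = F' k ∧ (G k).map S = G' k := by
  refine ⟨hT.choiceFor_left.map_eq hT'.choiceFor_left hk ?_,
    hT.choiceFor_middle.map_eq hT'.choiceFor_middle hk ?_,
    hT.choiceFor_right.map_eq hT'.choiceFor_right hk ?_⟩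
  · exact funext fun i => by simp
  · have h_column : ∀ i : Fin k, (arrayColumn M i : Vec d) = arrayColumn M' i :=
      fun i => funext fun r => hM r i r.2 (by omega)
    exact funext fun i => by simp [leadingFrame, h_column]
  · exact funext fun i => by simp

theorem exists_equiv_of_tripleRatio_eq (hd : 0 < d) {E F G E' F' G' : ℕ → Submodule ℝ (Vec d)}
    (hE : IsFlag E) (hF : IsFlag F) (hG : IsFlag G) (hE' : IsFlag E') (hF' : IsFlag F')
    (hG' : IsFlag G') (h : MaxSpan ![E, F, G]) (h' : MaxSpan ![E', F', G'])
    (h_ratio : ∀ a b c : ℕ, 1 ≤ a → 1 ≤ b → 1 ≤ c → a + b + c = d →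
      ∀ e f g e' f' g' : (k : ℕ) → Fin k → Vec d,
        ChoiceFor E e → ChoiceFor F f → ChoiceFor G g →
        ChoiceFor E' e' → ChoiceFor F' f' → ChoiceFor G' g' →
        tripleRatio a b c e f g = tripleRatio a b c e' f' g') :
    ∃ T : Vec d ≃ₗ[ℝ] Vec d, ∀ i, i ≤ d →
      (E i).map (T : Vec d →ₗ[ℝ] Vec d) = E' i ∧
      (F i).map (T : Vec d →ₗ[ℝ] Vec d) = F' i ∧
      (G i).map (T : Vec d →ₗ[ℝ] Vec d) = G' i := by
  obtain ⟨T, M, hM, hT⟩ := h.exists_standardizes hd hE hF hG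
  obtain ⟨T', M', hM', hT'⟩ := h'.exists_standardizes hd hE' hF' hG'
  have h_entries : ∀ r j, r < d → j < d → M r j = M' r j := fun r j hr hj => by
    refine hM.eq_of_hexRatio_solidMinor_eq hM' (fun a b => hT'.solidMinor_ne_zero h')
      (fun a b c ha hb hc habc => ?_) hr hj
    rw [← tripleRatio_map_standard T M ha hb hc habc,
      ← tripleRatio_map_standard T' M' ha hb hc habc]
    exact h_ratio a b c ha hb hc habc _ _ _ _ _ _ hT.choiceFor_left hT.choiceFor_middle
      hT.choiceFor_right hT'.choiceFor_left hT'.choiceFor_middle hT'.choiceFor_right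
  exact ⟨T.symm.trans T', fun i hi => hT.map_eq hT' h_entries hi⟩

lemma sup_spanFlag_standard_eq_top {M : ℕ → ℕ → ℝ} (hM : ∀ a b, a + b ≤ d → solidMinor M a b ≠ 0)
    {a b c : ℕ} (habc : a + b + c = d) :
    spanFlag (d := d) (leadingFrame stdVector) a ⊔ spanFlag (leadingFrame (arrayColumn M)) b ⊔
      spanFlag (trailingFrame stdVector) c = ⊤ := by
  refine (wedgeDet_ne_zero_iff habc _ _ _).1 ?_
  rw [wedgeDet_standard M habc]
  exact hM a b (by omega)

lemma isFlag_and_maxSpan_standard {M : ℕ → ℕ → ℝ}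
    (hM : ∀ a b, a + b ≤ d → solidMinor M a b ≠ 0) :
    let E : ℕ → Submodule ℝ (Vec d) := spanFlag (leadingFrame stdVector)
    let F : ℕ → Submodule ℝ (Vec d) := spanFlag (leadingFrame (arrayColumn M))
    let G : ℕ → Submodule ℝ (Vec d) := spanFlag (trailingFrame stdVector)
    IsFlag E ∧ IsFlag F ∧ IsFlag G ∧ MaxSpan ![E, F, G] := by
  intro E F G
  have h_top : ∀ a b c, a + b + c = d → E a ⊔ F b ⊔ G c = ⊤ :=
    fun a b c => sup_spanFlag_standard_eq_top hM
  have h_top_EG : ∀ a c, a + c = d → E a ⊔ G c = ⊤ := fun a c hac => by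
    simpa [F, spanFlag_zero] using h_top a 0 c hac
  have h_top_FG : ∀ b c, b + c = d → F b ⊔ G c = ⊤ := fun b c hbc => by
    simpa [E, spanFlag_zero] using h_top 0 b c (by omega)
  have hE : IsFlag E := isFlag_of_sup_eq_top (monotone_spanFlag_leadingFrame _)
    (finrank_spanFlag_le _) (finrank_spanFlag_le _) h_top_EG
  have hF : IsFlag F := isFlag_of_sup_eq_top (monotone_spanFlag_leadingFrame _)
    (finrank_spanFlag_le _) (finrank_spanFlag_le _) h_top_FG
  have hG : IsFlag G := isFlag_of_sup_eq_top (monotone_spanFlag_trailingFrame _)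
    (finrank_spanFlag_le _) (finrank_spanFlag_le _) fun c a hca => by
      rw [sup_comm, h_top_EG a c (by omega)]
  exact ⟨hE, hF, hG, maxSpan_of_sup_eq_top hE hF hG h_top⟩

theorem exists_flags_tripleRatio_eq (x : ℕ → ℕ → ℕ → ℝ)
    (hx : ∀ a b c : ℕ, 1 ≤ a → 1 ≤ b → 1 ≤ c → a + b + c = d → x a b c ≠ 0) :
    ∃ E F G : ℕ → Submodule ℝ (Vec d),
      IsFlag E ∧ IsFlag F ∧ IsFlag G ∧ MaxSpan ![E, F, G] ∧
      ∀ a b c : ℕ, 1 ≤ a → 1 ≤ b → 1 ≤ c → a + b + c = d →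
        ∀ e f g : (k : ℕ) → Fin k → Vec d,
          ChoiceFor E e → ChoiceFor F f → ChoiceFor G g →
          tripleRatio a b c e f g = x a b c := by
  let y : ℕ → ℕ → ℝ := fun a b => x a b (d - a - b)
  have hy : ∀ a b, 1 ≤ a → 1 ≤ b → a + b < d → y a b ≠ 0 := fun a b ha hb hab =>
    hx a b _ ha hb (by omega) (by omega)
  let M := matrixOfSolidMinors (hexSolution y)
  have hM : ∀ a b, a + b ≤ d → solidMinor M a b = hexSolution y a b := fun a b hab =>
    solidMinor_matrixOfSolidMinors (hexSolution_zero_right y)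
      (fun a b => hexSolution_ne_zero hy) hab
  have hM_ne : ∀ a b, a + b ≤ d → solidMinor M a b ≠ 0 := fun a b hab => by
    rw [hM a b hab]
    exact hexSolution_ne_zero hy hab
  obtain ⟨hE, hF, hG, h_max⟩ := isFlag_and_maxSpan_standard hM_ne
  refine ⟨_, _, _, hE, hF, hG, h_max, fun a b c ha hb hc habc e f g he hf hg => ?_⟩
  calc tripleRatio a b c e f g
      = tripleRatio a b c (leadingFrame stdVector) (leadingFrame (arrayColumn M))
          (trailingFrame stdVector) :=
        ChoiceFor.tripleRatio_eq hE hF hG (fun _ _ => rfl) (fun _ _ => rfl) (fun _ _ => rfl)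
          he hf hg ha hb hc habc
    _ = hexRatio (fun a b _ => solidMinor M a b) a b c :=
        tripleRatio_map_standard (LinearEquiv.refl ℝ (Vec d)) M ha hb hc habc
    _ = hexRatio (fun a b _ => hexSolution y a b) a b c :=
        hexRatio_congr (fun a b c h => hM a b (by omega)) ha hb hc habc
    _ = y a b := hexRatio_hexSolution hy ha hb hc habc
    _ = x a b c := by rw [← show d - a - b = c by omega]

end Configurations

/-- Theorem 2.4 (Fock–Goncharov): the triple ratios `X_{a,b,c}`, for
`(a,b,c) ∈ Θ°_d`, give a bijection between configurations of three maximum span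
flags in `ℝ^d` and `(ℝ∖{0})^{Θ°_d}`: (i) two maximum span triples with the same
triple ratios differ by an element of `GL(d,ℝ)`, and (ii) every collection of
nonzero reals indexed by `Θ°_d` is realized by some maximum span triple. -/
theorem stmt15 {d : ℕ} (hd : 3 ≤ d) :
    (∀ E F G E' F' G' : ℕ → Submodule ℝ (Vec d),
      IsFlag E → IsFlag F → IsFlag G → IsFlag E' → IsFlag F' → IsFlag G' →
      MaxSpan ![E, F, G] → MaxSpan ![E', F', G'] →
      (∀ a b c : ℕ, 1 ≤ a → 1 ≤ b → 1 ≤ c → a + b + c = d →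
        ∀ e f g e' f' g' : (k : ℕ) → Fin k → Vec d,
          ChoiceFor E e → ChoiceFor F f → ChoiceFor G g →
          ChoiceFor E' e' → ChoiceFor F' f' → ChoiceFor G' g' →
          tripleRatio a b c e f g = tripleRatio a b c e' f' g') →
      ∃ T : Vec d ≃ₗ[ℝ] Vec d, ∀ i, i ≤ d →
        (E i).map (T : Vec d →ₗ[ℝ] Vec d) = E' i ∧
        (F i).map (T : Vec d →ₗ[ℝ] Vec d) = F' i ∧
        (G i).map (T : Vec d →ₗ[ℝ] Vec d) = G' i) ∧
    (∀ x : ℕ → ℕ → ℕ → ℝ,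
      (∀ a b c : ℕ, 1 ≤ a → 1 ≤ b → 1 ≤ c → a + b + c = d → x a b c ≠ 0) →
      ∃ E F G : ℕ → Submodule ℝ (Vec d),
        IsFlag E ∧ IsFlag F ∧ IsFlag G ∧ MaxSpan ![E, F, G] ∧
        ∀ a b c : ℕ, 1 ≤ a → 1 ≤ b → 1 ≤ c → a + b + c = d →
          ∀ e f g : (k : ℕ) → Fin k → Vec d,
            ChoiceFor E e → ChoiceFor F f → ChoiceFor G g →
            tripleRatio a b c e f g = x a b c) := by
  refine ⟨fun E F G E' F' G' hE hF hG hE' hF' hG' h h' h_ratio => ?_, exists_flags_tripleRatio_eq⟩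
  exact exists_equiv_of_tripleRatio_eq (by omega) hE hF hG hE' hF' hG' h h' h_ratio
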